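/- Let $X$ be a smooth complete intersection of $k_1 \ge 0$ quadrics and $k_2 \ge 1$ cubics in $\mathbb{P}^N$ with $i_X = N + 1 - 2k_1 - 3k_2$ positive and divisible by 3, and set $p = i_X/3$. Then $h^{p,n-p}_{pr}(X) = \binom{(N - 2k_1 - 2)/3}{k_2 - 1}$; in particular this equals 1 if and only if $k_2 = 1$. -/

import Mathlib

open MvPolynomial

/-!
Weight the variables `x_i` by `(0, 1)` and `w_j` by `(1, -d_j)`, and let `D` bound the `d_j`. The
functional `(a, b) ↦ D * a + b` is nonnegative on all these weights and vanishes on `(p, -D p)`, so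
a monomial of bidegree `(p, -D p)` involves only variables of functional value `0`: the `w_j` with
`d_j = D`. There are `multichoose #{j | d_j = D} p` such monomials. They stay independent in the
Jacobian ring of `F = ∑ w_j f_j`: its relations are the `f_j` and the `∑ w_j ∂_i f_j`, and since
`d_j ≥ 2` all of them die when the `x_i` are set to `0`.
-/

section Weights

variable {R σ τ M : Type*} [CommSemiring R] [AddCommMonoid M]

lemma isWeightedHomogeneous_rename_iff {w : τ → M} {m : M} {φ : σ → τ}
    (hφ : Function.Injective φ) {q : MvPolynomial σ R} :
    IsWeightedHomogeneous w (rename φ q) m ↔ IsWeightedHomogeneous (w ∘ φ) q m := by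
  have weight_mapDomain (u : σ →₀ ℕ) :
      Finsupp.weight w (u.mapDomain φ) = Finsupp.weight (w ∘ φ) u :=
    Finsupp.linearCombination_mapDomain ..
  constructor
  · intro h u hu
    rw [← weight_mapDomain]
    exact h (by rwa [coeff_rename_mapDomain φ hφ])
  · intro h v hv
    obtain ⟨u, rfl, hu⟩ := coeff_rename_ne_zero φ q v hv
    rw [weight_mapDomain]
    exact h hu

lemma weightedHomogeneousSubmodule_eq_map_rename {w : τ → M} {m : M} {φ : σ → τ}
    (hφ : Function.Injective φ)
    (hsupp : ∀ u : τ →₀ ℕ, Finsupp.weight w u = m → ∀ i ∈ u.support, i ∈ Set.range φ) :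
    weightedHomogeneousSubmodule R w m =
      (weightedHomogeneousSubmodule R (w ∘ φ) m).map (rename φ).toLinearMap := by
  ext v
  constructor
  · intro hv
    have hvars : ↑v.vars ⊆ Set.range φ := fun i hi => by
      obtain ⟨u, hu, hiu⟩ := (mem_vars_iff_mem_support i).1 hi
      exact hsupp u (hv (mem_support_iff.1 hu)) i hiu
    obtain ⟨q, rfl⟩ := exists_rename_eq_of_vars_subset_range v φ hφ hvars
    exact ⟨q, (isWeightedHomogeneous_rename_iff hφ).1 hv, rfl⟩
  · rintro ⟨q, hq, rfl⟩
    exact (isWeightedHomogeneous_rename_iff hφ).2 hq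

lemma map_apply_eq_zero_of_map_weight_eq_zero {N : Type*} [AddCommMonoid N] [PartialOrder N]
    [IsOrderedAddMonoid N] (L : M →+ N) {w : σ → M} (hw : ∀ i, 0 ≤ L (w i)) {u : σ →₀ ℕ}
    (hu : L (Finsupp.weight w u) = 0) {i : σ} (hi : i ∈ u.support) : L (w i) = 0 := by
  have weight_comp : Finsupp.weight (L ∘ w) u = 0 := by
    simpa only [Finsupp.weight_apply, map_finsuppSum, map_nsmul, Function.comp_apply] using hu
  refine le_antisymm ?_ (hw i)
  rw [← weight_comp]
  exact Finsupp.le_weight_of_ne_zero hw (Finsupp.mem_support_iff.1 hi)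

lemma weightedHomogeneousSubmodule_const {c : M} (hc : Function.Injective fun k : ℕ => k • c)
    (n : ℕ) :
    weightedHomogeneousSubmodule R (fun _ : σ => c) (n • c) = homogeneousSubmodule σ R n := by
  have weight_const (u : σ →₀ ℕ) : Finsupp.weight (fun _ => c) u = u.degree • c := by
    rw [Finsupp.weight_apply, Finsupp.degree_apply, Finset.sum_smul, Finsupp.sum]
  ext q
  simp only [mem_weightedHomogeneousSubmodule, mem_homogeneousSubmodule, IsHomogeneous,
    IsWeightedHomogeneous, weight_const, hc.eq_iff, Finsupp.degree_eq_weight_one]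
  rfl

end Weights

lemma finrank_homogeneousSubmodule (R σ : Type*) [CommSemiring R] [StrongRankCondition R]
    [Fintype σ] (n : ℕ) :
    Module.finrank R (homogeneousSubmodule σ R n) = (Fintype.card σ).multichoose n := by
  classical
  let monomialsEquivSym : {u : σ →₀ ℕ | u.degree = n} ≃ Sym σ n := (Sym.equivNatSum σ n).symm
  let _ : Fintype {u : σ →₀ ℕ | u.degree = n} := Fintype.ofEquiv _ monomialsEquivSym.symm
  rw [homogeneousSubmodule_eq_finsupp_supported,
    (AddMonoidAlgebra.supportedEquivFinsupp _).finrank_eq, Module.finrank_finsupp_self,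
    Fintype.card_congr monomialsEquivSym, Sym.card_sym_eq_multichoose]

lemma mkₐ_comp_rename_injective {R σ τ : Type*} [CommRing R] {φ : σ → τ}
    (hφ : Function.Injective φ) {I : Ideal (MvPolynomial τ R)}
    (hI : I ≤ RingHom.ker (killCompl (R := R) hφ)) :
    Function.Injective ((Ideal.Quotient.mkₐ R I).comp (rename φ)) := by
  have retraction : Function.LeftInverse (Ideal.Quotient.liftₐ I (killCompl hφ) hI)
      ((Ideal.Quotient.mkₐ R I).comp (rename φ)) := fun q => killCompl_rename_app hφ q
  exact retraction.injective

section Cayley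

variable {R σ ι : Type*}

/-- The ideal of all first partial derivatives of `F`. -/
noncomputable def jacobianIdeal [CommSemiring R] (F : MvPolynomial σ R) :
    Ideal (MvPolynomial σ R) :=
  Ideal.span (Set.range fun i => pderiv i F)

/-- The piece of weight `m` of the Jacobian ring of `F`, as the image of the polynomials of weight
`m`; this also makes sense when `F` is not weighted homogeneous. -/
noncomputable def jacobianRingPiece [CommRing R] {M : Type*} [AddCommMonoid M]
    (F : MvPolynomial σ R) (w : σ → M) (m : M) : Submodule R (MvPolynomial σ R ⧸ jacobianIdeal F) :=
  (weightedHomogeneousSubmodule R w m).map (Ideal.Quotient.mkₐ R (jacobianIdeal F)).toLinearMap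

/-- The polynomial `∑ w_j f_j` of the Cayley trick; `Sum.inl` indexes the variables of the `f_j`
and `Sum.inr` the new variables `w_j`. -/
noncomputable def cayleyPolynomial [CommSemiring R] [Fintype ι] (f : ι → MvPolynomial σ R) :
    MvPolynomial (σ ⊕ ι) R :=
  ∑ j, X (Sum.inr j) * rename Sum.inl (f j)

/-- The bidegrees `(0, 1)` of the `x_i` and `(1, -d_j)` of the `w_j`, for which
`cayleyPolynomial f` has bidegree `(1, 0)` when each `f j` is homogeneous of degree `d j`. -/
def cayleyWeight (d : ι → ℕ) : σ ⊕ ι → ℤ × ℤ :=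
  Sum.elim (fun _ => (0, 1)) fun j => (1, -(d j : ℤ))

lemma pderiv_inr_rename_inl [CommSemiring R] (j : ι) (g : MvPolynomial σ R) :
    pderiv (Sum.inr j) (rename Sum.inl g) = 0 := by
  classical
  refine pderiv_eq_zero_of_notMem_vars fun hj => ?_
  obtain ⟨i, -, hi⟩ := Finset.mem_image.1 (vars_rename Sum.inl g hj)
  exact Sum.inl_ne_inr hi

lemma pderiv_inr_cayleyPolynomial [CommSemiring R] [Fintype ι] (f : ι → MvPolynomial σ R) (j : ι) :
    pderiv (Sum.inr j) (cayleyPolynomial f) = rename Sum.inl (f j) := by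
  classical
  simp [cayleyPolynomial, pderiv_inr_rename_inl, pderiv_X, Pi.single_apply]

lemma pderiv_inl_cayleyPolynomial [CommSemiring R] [Fintype ι] (f : ι → MvPolynomial σ R) (i : σ) :
    pderiv (Sum.inl i) (cayleyPolynomial f) = cayleyPolynomial fun j => pderiv i (f j) := by
  simp [cayleyPolynomial, pderiv_rename Sum.inl_injective, pderiv_X_of_ne]

lemma killCompl_inr_rename_inl [CommSemiring R] (g : MvPolynomial σ R) :
    killCompl (Sum.inr_injective (α := σ) (β := ι)) (rename Sum.inl g) = C (constantCoeff g) := by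
  have kill_inl : (killCompl (R := R) (Sum.inr_injective (α := σ) (β := ι))).comp
      (rename Sum.inl) = aeval fun _ => 0 := by
    ext i
    simp [killCompl]
  simpa only [AlgHom.comp_apply, aeval_zero', algebraMap_eq] using DFunLike.congr_fun kill_inl g

lemma jacobianIdeal_cayleyPolynomial_le_ker_killCompl_inr [CommSemiring R] [Fintype ι]
    {f : ι → MvPolynomial σ R} (hf : ∀ j, constantCoeff (f j) = 0)
    (hdf : ∀ j i, constantCoeff (pderiv i (f j)) = 0) :
    jacobianIdeal (cayleyPolynomial f) ≤
      RingHom.ker (killCompl (R := R) (Sum.inr_injective (α := σ) (β := ι))) := by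
  rw [jacobianIdeal, Ideal.span_le]
  rintro _ ⟨i | j, rfl⟩
  · simp only [SetLike.mem_coe, RingHom.mem_ker, pderiv_inl_cayleyPolynomial]
    simp [cayleyPolynomial, killCompl_inr_rename_inl, hdf]
  · simp [pderiv_inr_cayleyPolynomial, killCompl_inr_rename_inl, hf]

lemma mkₐ_jacobianIdeal_comp_rename_inr_injective [CommRing R] [Fintype ι]
    {f : ι → MvPolynomial σ R} {d : ι → ℕ} (hf : ∀ j, (f j).IsHomogeneous (d j))
    (hd : ∀ j, 2 ≤ d j) :
    Function.Injective
      ((Ideal.Quotient.mkₐ R (jacobianIdeal (cayleyPolynomial f))).comp (rename Sum.inr)) := by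
  have constantCoeff_eq_zero {g : MvPolynomial σ R} {n : ℕ} (hg : g.IsHomogeneous n)
      (hn : 0 < n) : constantCoeff g = 0 :=
    hg.coeff_eq_zero (by simpa using hn.ne)
  refine mkₐ_comp_rename_injective Sum.inr_injective
    (jacobianIdeal_cayleyPolynomial_le_ker_killCompl_inr (fun j => ?_) fun j i => ?_)
  · exact constantCoeff_eq_zero (hf j) (by have := hd j; omega)
  · exact constantCoeff_eq_zero (hf j).pderiv (by have := hd j; omega)

lemma mem_range_inr_of_weight_cayleyWeight_eq {d : ι → ℕ} {D : ℕ} (hD : ∀ j, d j ≤ D) {p : ℕ}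
    {u : σ ⊕ ι →₀ ℕ}
    (hu : Finsupp.weight (cayleyWeight d) u = ((p : ℤ), -((D * p : ℕ) : ℤ))) {s : σ ⊕ ι}
    (hs : s ∈ u.support) : s ∈ Set.range (Sum.inr ∘ Subtype.val : {j // d j = D} → σ ⊕ ι) := by
  let L : ℤ × ℤ →+ ℤ := (AddMonoidHom.mulLeft (D : ℤ)).coprod (AddMonoidHom.id ℤ)
  have L_inl (i : σ) : L (cayleyWeight d (Sum.inl i : σ ⊕ ι)) = 1 := by simp [L, cayleyWeight]
  have L_inr (j : ι) : L (cayleyWeight d (Sum.inr j : σ ⊕ ι)) = D - d j := by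
    simp [L, cayleyWeight, sub_eq_add_neg]
  have L_nonneg : ∀ t : σ ⊕ ι, 0 ≤ L (cayleyWeight d t)
    | .inl i => by simp [L_inl]
    | .inr j => by simpa [L_inr] using hD j
  have L_weight : L (Finsupp.weight (cayleyWeight d) u) = 0 := by simp [hu, L]
  have L_eq_zero := map_apply_eq_zero_of_map_weight_eq_zero L L_nonneg L_weight hs
  rcases s with i | j
  · simp [L_inl] at L_eq_zero
  · exact ⟨⟨j, by rw [L_inr] at L_eq_zero; omega⟩, rfl⟩

lemma weightedHomogeneousSubmodule_cayleyWeight [CommSemiring R] {d : ι → ℕ} {D : ℕ}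
    (hD : ∀ j, d j ≤ D) (p : ℕ) :
    weightedHomogeneousSubmodule R (cayleyWeight (σ := σ) d) ((p : ℤ), -((D * p : ℕ) : ℤ)) =
      (homogeneousSubmodule {j // d j = D} R p).map
        (rename (Sum.inr ∘ Subtype.val : {j // d j = D} → σ ⊕ ι)).toLinearMap := by
  let c : ℤ × ℤ := (1, -D)
  have weight_comp_inr :
      cayleyWeight (σ := σ) d ∘ Sum.inr ∘ (Subtype.val : {j // d j = D} → ι) = fun _ => c := by
    funext ⟨j, hj⟩
    simp [c, cayleyWeight, hj]
  have degree_eq : ((p : ℤ), -((D * p : ℕ) : ℤ)) = p • c := by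
    simp [c, mul_comm]
  have smul_injective : Function.Injective fun k : ℕ => k • c := fun k l h => by
    simpa [c] using congrArg Prod.fst h
  rw [weightedHomogeneousSubmodule_eq_map_rename
      (Sum.inr_injective.comp Subtype.val_injective)
      fun u hu s hs => mem_range_inr_of_weight_cayleyWeight_eq hD hu hs,
    weight_comp_inr, degree_eq, weightedHomogeneousSubmodule_const smul_injective]

theorem finrank_jacobianRingPiece_cayleyPolynomial [CommRing R] [Nontrivial R] [Fintype ι]
    {f : ι → MvPolynomial σ R} {d : ι → ℕ} (hf : ∀ j, (f j).IsHomogeneous (d j))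
    (hd : ∀ j, 2 ≤ d j) {D : ℕ} (hD : ∀ j, d j ≤ D) (p : ℕ) :
    Module.finrank R (jacobianRingPiece (cayleyPolynomial f) (cayleyWeight d)
        ((p : ℤ), -((D * p : ℕ) : ℤ))) =
      (Fintype.card {j // d j = D}).multichoose p := by
  let mk := Ideal.Quotient.mkₐ R (jacobianIdeal (cayleyPolynomial f))
  have mk_rename_injective : Function.Injective
      (mk.toLinearMap ∘ₗ (rename (Sum.inr ∘ Subtype.val : {j // d j = D} → σ ⊕ ι)).toLinearMap) :=
    fun q r h => rename_injective _ Subtype.val_injective <|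
      mkₐ_jacobianIdeal_comp_rename_inr_injective hf hd <| by simpa [mk, rename_rename] using h
  rw [jacobianRingPiece, weightedHomogeneousSubmodule_cayleyWeight hD, ← Submodule.map_comp,
    ← (Submodule.equivMapOfInjective _ mk_rename_injective _).finrank_eq,
    finrank_homogeneousSubmodule]

end Cayley

theorem stmt_14_general {K σ : Type*} [CommRing K] [Nontrivial K] {k1 k2 p : ℕ} (hk2 : 1 ≤ k2)
    (hp : 0 < p) (f : Fin (k1 + k2) → MvPolynomial σ K)
    (hhom : ∀ j : Fin (k1 + k2), (f j).IsHomogeneous (if (j : ℕ) < k1 then 2 else 3)) :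
    Module.finrank K
      (jacobianRingPiece (cayleyPolynomial f)
        (Sum.elim (fun _ : σ => ((0 : ℤ), (1 : ℤ)))
          (fun j : Fin (k1 + k2) => ((1 : ℤ), if (j : ℕ) < k1 then (-2 : ℤ) else (-3 : ℤ))))
        ((p : ℤ), -((3 * p : ℕ) : ℤ))) = (p + k2 - 1).choose (k2 - 1) ∧
      ((p + k2 - 1).choose (k2 - 1) = 1 ↔ k2 = 1) := by
  let d (j : Fin (k1 + k2)) : ℕ := if (j : ℕ) < k1 then 2 else 3
  have weight_eq : (Sum.elim (fun _ : σ => ((0 : ℤ), (1 : ℤ))) (fun j : Fin (k1 + k2) =>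
      ((1 : ℤ), if (j : ℕ) < k1 then (-2 : ℤ) else (-3 : ℤ)))) = cayleyWeight d := by
    simp [cayleyWeight, d, apply_ite]
  have card_cubics : Fintype.card {j // d j = 3} = k2 := by
    rw [Fintype.card_subtype, Finset.card_filter, Fin.sum_univ_add]
    simp [d]
  constructor
  · rw [weight_eq, finrank_jacobianRingPiece_cayleyPolynomial hhom (by grind) (by grind),
      card_cubics, Nat.multichoose_eq, add_comm]
    exact Nat.choose_symm_of_eq_add (by omega)
  · rw [Nat.choose_eq_one_iff]
    omega

/-- Lemma 3.7(iii), `r = 0` case: for a smooth complete intersection `X` of `k1 ≥ 0`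
quadrics and `k2 ≥ 1` cubics in `ℙ^N` with `i_X = N + 1 - 2k1 - 3k2` positive and
divisible by `3`, `p = i_X/3`, the primitive Hodge number `h^{p,n-p}_{pr}(X)`, computed
as `dim R_{p,-i_X}` of the bigraded Jacobian ring (Theorem 2.9), equals
`C((N-2k1-2)/3, k2-1)`; in particular it is `1` iff `k2 = 1`.
Here the degrees are `d_j = 2` for `j < k1` and `d_j = 3` otherwise, and smoothness is
expressed by the Jacobian criterion on the affine cone. -/
theorem stmt_14 (N k1 k2 : ℕ) (hk2 : 1 ≤ k2)
    (f : Fin (k1 + k2) → MvPolynomial (Fin (N + 1)) ℂ)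
    (hhom : ∀ j : Fin (k1 + k2), (f j).IsHomogeneous (if (j : ℕ) < k1 then 2 else 3))
    (hreg : RingTheory.Sequence.IsRegular (MvPolynomial (Fin (N + 1)) ℂ) (List.ofFn f))
    (hsmooth : ∀ x : Fin (N + 1) → ℂ, x ≠ 0 → (∀ j, eval x (f j) = 0) →
      (Matrix.of fun (j : Fin (k1 + k2)) (s : Fin (N + 1)) =>
        eval x (pderiv s (f j))).rank = k1 + k2)
    (hipos : 2 * k1 + 3 * k2 < N + 1)
    (hdvd : 3 ∣ (N + 1 - (2 * k1 + 3 * k2))) :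
    Module.finrank ℂ
      (Submodule.map
        (Ideal.Quotient.mkₐ ℂ
          (Ideal.span (Set.range fun s : Fin (N + 1) ⊕ Fin (k1 + k2) =>
            pderiv s
              (∑ j : Fin (k1 + k2), X (Sum.inr j) * rename Sum.inl (f j))))).toLinearMap
        (weightedHomogeneousSubmodule ℂ
          (Sum.elim (fun _ : Fin (N + 1) => ((0 : ℤ), (1 : ℤ)))
            (fun j : Fin (k1 + k2) =>
              ((1 : ℤ), if (j : ℕ) < k1 then (-2 : ℤ) else (-3 : ℤ))))
          ((((N + 1 - (2 * k1 + 3 * k2)) / 3 : ℕ) : ℤ),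
            -((N + 1 - (2 * k1 + 3 * k2) : ℕ) : ℤ)))) =
      Nat.choose ((N - 2 * k1 - 2) / 3) (k2 - 1) ∧
      (Nat.choose ((N - 2 * k1 - 2) / 3) (k2 - 1) = 1 ↔ k2 = 1) := by
  obtain ⟨p, hp⟩ := hdvd
  rw [hp, Nat.mul_div_cancel_left p three_pos, show (N - 2 * k1 - 2) / 3 = p + k2 - 1 by omega]
  exact stmt_14_general hk2 (by omega) f hhom
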